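/- Let k ≥ 1 and let C_1,…,C_{n_c} be binary linear codes, where C_h has length n_h, a k×n_h generator matrix of rank k, and minimum distance d^{(h)}_min ≥ 2; let P_1,…,P_{n_c} be nonnegative reals summing to 1, Ā_2 := Σ_h P_h A^{(h)}_2 > 0 with A^{(h)}_2 the number of weight-2 codewords of C_h, and let f(x,G) := 1 − exp( −(G/k) Σ_h P_h Σ_{t=0}^{n_h−1} a^{(h)}_t x^t (1−x)^{n_h−1−t} ) with a^{(h)}_t := (n_h−t)·ẽ^{(h)}_{n_h−t} − (t+1)·ẽ^{(h)}_{n_h−1−t}. Fix G > 0 and assume that x ↦ f(x,G) is nondecreasing on [0,1] and maps [0,1] into [0,1]. If the sequence defined by p_0 = 1 and p_i = f(p_{i−1},G) converges to 0, then G ≤ k/(2Ā_2). In particular, the asymptotic threshold G* := sup{G ≥ 0 : p_i → 0 with p_0 = 1} satisfies G* ≤ k/(2Ā_2). -/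

import Mathlib

/-!
Deleting from `C` the columns outside `S` loses exactly the messages whose codeword is supported on
`Sᶜ`, so by rank-nullity `colRank C S` is `k` minus the dimension of that space of messages. Minimum
distance at least `2` makes this space trivial when at most one column is deleted, and spanned by at
most one message, encoded as the indicator of `Sᶜ`, when two columns are deleted. Hence
`ẽ_n = k`, `ẽ_{n-1} = n k` and `ẽ_{n-2} = (n choose 2) k - A₂`, which give `a₀ = 0` and `a₁ = 2 A₂`.

Therefore `f(0, G) = 0` and `∂f/∂x (0, G) = 2 G Ā₂ / k`. If `G > k / (2 Ā₂)` this slope exceeds `1`,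
so `f(x₀, G) > x₀` for some `x₀ ∈ (0, 1)`; monotonicity of `f(·, G)` then keeps the orbit of `1`
above `x₀`, and it cannot converge to `0`.
-/

open Filter

attribute [local instance] Classical.propDecidable

/-- Rank of the submatrix of `G` formed by the columns indexed by `S`. -/
noncomputable def colRank {k n : ℕ} (G : Matrix (Fin k) (Fin n) (ZMod 2))
    (S : Finset (Fin n)) : ℕ :=
  (G.submatrix id (Subtype.val : {x // x ∈ S} → Fin n)).rank

/-- The `g`-th un-normalized information function of `G`. -/
noncomputable def infoFun {k n : ℕ} (G : Matrix (Fin k) (Fin n) (ZMod 2)) (g : ℕ) : ℕ :=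
  ∑ S ∈ Finset.univ.filter (fun S : Finset (Fin n) => S.card = g), colRank G S

/-- Hamming weight of a binary vector. -/
def wt {n : ℕ} (c : Fin n → ZMod 2) : ℕ :=
  (Finset.univ.filter (fun i => c i ≠ 0)).card

/-- The binary vector of length `n` whose support is `T`. -/
noncomputable def indVec {n : ℕ} (T : Finset (Fin n)) : Fin n → ZMod 2 :=
  fun i => if i ∈ T then 1 else 0

lemma wt_indVec {n : ℕ} (T : Finset (Fin n)) : wt (indVec T) = T.card := by
  unfold wt indVec
  congr 1
  ext i
  simp

lemma zmod_two_eq_one {x : ZMod 2} (h : x ≠ 0) : x = 1 := by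
  revert x; decide

/-- Rank-nullity for the map sending a message to its codeword restricted to `S`. -/
lemma colRank_add_ker {k n : ℕ} (C : Matrix (Fin k) (Fin n) (ZMod 2)) (S : Finset (Fin n)) :
    colRank C S + Module.finrank (ZMod 2) (LinearMap.ker
      (C.submatrix id (Subtype.val : {x // x ∈ S} → Fin n)).vecMulLinear) = k := by
  have h := LinearMap.finrank_range_add_finrank_ker
    (C.submatrix id (Subtype.val : {x // x ∈ S} → Fin n)).vecMulLinear
  rw [Module.finrank_fin_fun] at h
  unfold colRank
  rw [← Matrix.rank_transpose, Matrix.rank, Matrix.mulVecLin_transpose]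
  exact h

lemma mem_ker_iff {k n : ℕ} (C : Matrix (Fin k) (Fin n) (ZMod 2)) (S : Finset (Fin n))
    (u : Fin k → ZMod 2) :
    u ∈ LinearMap.ker (C.submatrix id (Subtype.val : {x // x ∈ S} → Fin n)).vecMulLinear ↔
      ∀ i ∈ S, Matrix.vecMul u C i = 0 := by
  rw [LinearMap.mem_ker]
  constructor
  · intro h i hi
    exact congrFun h ⟨i, hi⟩
  · intro h
    funext i
    exact h i.1 i.2

lemma vecMul_inj {k n : ℕ} (C : Matrix (Fin k) (Fin n) (ZMod 2)) (hr : C.rank = k) :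
    Function.Injective C.vecMulLinear := by
  rw [← LinearMap.ker_eq_bot, ← Submodule.finrank_eq_zero (R := ZMod 2)]
  have h := LinearMap.finrank_range_add_finrank_ker C.vecMulLinear
  rw [Module.finrank_fin_fun] at h
  rw [← Matrix.rank_transpose, Matrix.rank, Matrix.mulVecLin_transpose] at hr
  omega

/-- A nonzero message whose codeword vanishes outside at most two positions encodes to the
indicator of exactly those positions. -/
lemma ker_nonzero {k n : ℕ} (C : Matrix (Fin k) (Fin n) (ZMod 2)) (hr : C.rank = k)
    (hd : ∀ c ∈ LinearMap.range C.vecMulLinear, c ≠ 0 → 2 ≤ wt c)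
    (S : Finset (Fin n)) (hS : Sᶜ.card ≤ 2) (u : Fin k → ZMod 2) (hu : u ≠ 0)
    (hk : ∀ i ∈ S, Matrix.vecMul u C i = 0) :
    Sᶜ.card = 2 ∧ C.vecMulLinear u = indVec Sᶜ := by
  have hne : C.vecMulLinear u ≠ 0 := fun h => hu (vecMul_inj C hr (by rw [h, map_zero]))
  have h2 := hd _ ⟨u, rfl⟩ hne
  have hsub : (Finset.univ.filter (fun i => C.vecMulLinear u i ≠ 0)) ⊆ Sᶜ := by
    intro i hi
    rw [Finset.mem_filter] at hi
    rw [Finset.mem_compl]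
    exact fun h => hi.2 (hk i h)
  unfold wt at h2
  have hle := Finset.card_le_card hsub
  refine ⟨by omega, ?_⟩
  have heq := Finset.eq_of_subset_of_card_le hsub (by omega)
  funext i
  unfold indVec
  rw [← heq]
  by_cases h : C.vecMulLinear u i = 0
  · rw [if_neg, h]
    exact fun hi => (Finset.mem_filter.1 hi).2 h
  · rw [if_pos]
    · exact zmod_two_eq_one h
    · exact Finset.mem_filter.2 ⟨Finset.mem_univ _, h⟩

lemma colRank_of_compl_le_one {k n : ℕ} (C : Matrix (Fin k) (Fin n) (ZMod 2)) (hr : C.rank = k)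
    (hd : ∀ c ∈ LinearMap.range C.vecMulLinear, c ≠ 0 → 2 ≤ wt c)
    (S : Finset (Fin n)) (hS : Sᶜ.card ≤ 1) : colRank C S = k := by
  have h := colRank_add_ker C S
  have hker : LinearMap.ker
      (C.submatrix id (Subtype.val : {x // x ∈ S} → Fin n)).vecMulLinear = ⊥ := by
    rw [Submodule.eq_bot_iff]
    intro u hu
    by_contra hne
    have := (ker_nonzero C hr hd S (by omega) u hne ((mem_ker_iff C S u).1 hu)).1
    omega
  rw [hker, finrank_bot] at h
  simpa using h

/-- Deleting two columns lowers the rank by one exactly when their indicator is a codeword. -/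
lemma colRank_of_compl_two {k n : ℕ} (C : Matrix (Fin k) (Fin n) (ZMod 2)) (hr : C.rank = k)
    (hd : ∀ c ∈ LinearMap.range C.vecMulLinear, c ≠ 0 → 2 ≤ wt c)
    (S : Finset (Fin n)) (hS : Sᶜ.card = 2) :
    colRank C S + (if indVec Sᶜ ∈ LinearMap.range C.vecMulLinear then 1 else 0) = k := by
  have h := colRank_add_ker C S
  split_ifs with hc
  · obtain ⟨u, hu⟩ := hc
    have hu0 : u ≠ 0 := by
      rintro rfl
      have hw := wt_indVec Sᶜ
      rw [← hu, map_zero, hS] at hw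
      simp [wt] at hw
    have hker : LinearMap.ker
        (C.submatrix id (Subtype.val : {x // x ∈ S} → Fin n)).vecMulLinear
          = Submodule.span (ZMod 2) {u} := by
      apply le_antisymm
      · intro v hv
        by_cases hv0 : v = 0
        · rw [hv0]; exact Submodule.zero_mem _
        · have := (ker_nonzero C hr hd S (by omega) v hv0 ((mem_ker_iff C S v).1 hv)).2
          rw [vecMul_inj C hr (this.trans hu.symm)]
          exact Submodule.mem_span_singleton_self u
      · rw [Submodule.span_singleton_le_iff_mem, mem_ker_iff]
        intro i hi
        have := congrFun hu i
        simpa [indVec, hi] using this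
    rw [hker, finrank_span_singleton hu0] at h
    exact h
  · have hker : LinearMap.ker
        (C.submatrix id (Subtype.val : {x // x ∈ S} → Fin n)).vecMulLinear = ⊥ := by
      rw [Submodule.eq_bot_iff]
      intro u hu
      by_contra hne
      exact hc ⟨u, (ker_nonzero C hr hd S (by omega) u hne ((mem_ker_iff C S u).1 hu)).2⟩
    rw [hker, finrank_bot] at h
    exact h

lemma card_filter_card (n g : ℕ) :
    (Finset.univ.filter (fun S : Finset (Fin n) => S.card = g)).card = n.choose g := by
  simp

/-- If at most one column is deleted then no rank is lost. -/
lemma infoFun_of_le_one {k n : ℕ} (C : Matrix (Fin k) (Fin n) (ZMod 2)) (hr : C.rank = k)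
    (hd : ∀ c ∈ LinearMap.range C.vecMulLinear, c ≠ 0 → 2 ≤ wt c)
    (g : ℕ) (hg : n ≤ g + 1) : infoFun C g = n.choose g * k := by
  unfold infoFun
  rw [Finset.sum_congr rfl (g := fun _ => k), Finset.sum_const, card_filter_card, smul_eq_mul]
  intro S hS
  rw [Finset.mem_filter] at hS
  apply colRank_of_compl_le_one C hr hd
  rw [Finset.card_compl, Fintype.card_fin]
  omega

lemma infoFun_sub_two {k n : ℕ} (C : Matrix (Fin k) (Fin n) (ZMod 2)) (hr : C.rank = k)
    (hd : ∀ c ∈ LinearMap.range C.vecMulLinear, c ≠ 0 → 2 ≤ wt c) (hn : 2 ≤ n) :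
    infoFun C (n - 2) + (Finset.univ.filter (fun c : Fin n → ZMod 2 =>
          c ∈ LinearMap.range C.vecMulLinear ∧ wt c = 2)).card = n.choose 2 * k := by
  have hcompl : ∀ S : Finset (Fin n), S.card = n - 2 → Sᶜ.card = 2 := by
    intro S hS
    rw [Finset.card_compl, Fintype.card_fin]
    omega
  -- a weight-2 codeword corresponds to its zero set, a set of `n - 2` columns
  have hcard : (Finset.univ.filter (fun c : Fin n → ZMod 2 =>
          c ∈ LinearMap.range C.vecMulLinear ∧ wt c = 2)).card =
      ∑ S ∈ Finset.univ.filter (fun S : Finset (Fin n) => S.card = n - 2),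
        (if indVec Sᶜ ∈ LinearMap.range C.vecMulLinear then 1 else 0) := by
    rw [← Finset.sum_filter, ← Finset.card_eq_sum_ones]
    symm
    apply Finset.card_bij (fun S _ => indVec Sᶜ)
    · intro S hS
      simp only [Finset.mem_filter, Finset.mem_univ, true_and] at hS ⊢
      exact ⟨hS.2, by rw [wt_indVec]; exact hcompl S hS.1⟩
    · intro S _ T _ h
      ext i
      have := congrFun h i
      by_cases h1 : i ∈ S <;> by_cases h2 : i ∈ T <;> simp_all [indVec]
    · intro c hc
      simp only [Finset.mem_filter, Finset.mem_univ, true_and] at hc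
      have hind : indVec (((Finset.univ.filter (fun i => c i ≠ 0))ᶜ)ᶜ) = c := by
        funext i
        rw [compl_compl]
        unfold indVec
        by_cases h : c i = 0
        · simp [h]
        · simpa [h] using (zmod_two_eq_one h).symm
      refine ⟨(Finset.univ.filter (fun i => c i ≠ 0))ᶜ, ?_, hind⟩
      simp only [Finset.mem_filter, Finset.mem_univ, true_and]
      refine ⟨?_, by rw [hind]; exact hc.1⟩
      have h2 := hc.2
      unfold wt at h2
      rw [Finset.card_compl, Fintype.card_fin, h2]
  rw [hcard]
  unfold infoFun
  rw [← Finset.sum_add_distrib, Finset.sum_congr rfl (g := fun _ => k), Finset.sum_const,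
    card_filter_card, smul_eq_mul, Nat.choose_symm hn]
  intro S hS
  rw [Finset.mem_filter] at hS
  exact colRank_of_compl_two C hr hd S (hcompl S hS.2)

/-- A binary code of positive dimension and minimum distance at least `2` has length at least
`2`. -/
lemma two_le_length {k n : ℕ} (hk : 1 ≤ k) (C : Matrix (Fin k) (Fin n) (ZMod 2))
    (hr : C.rank = k)
    (hd : ∀ c ∈ LinearMap.range C.vecMulLinear, c ≠ 0 → 2 ≤ wt c) : 2 ≤ n := by
  have hu : (fun _ => 1 : Fin k → ZMod 2) ≠ 0 := fun h => by
    simpa using congrFun h ⟨0, hk⟩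
  have h2 := hd _ ⟨fun _ => 1, rfl⟩
    (fun h => hu (vecMul_inj C hr (by rw [h, map_zero])))
  refine h2.trans ?_
  unfold wt
  exact (Finset.card_le_univ _).trans (by simp)

/-- The sum `∑ aₜ xᵗ (1 - x)^(n-1-t)` has derivative `a₁` at `0` when `a₀ = 0`. -/
lemma hasDerivAt_bernstein_sum (n : ℕ) (hn : 2 ≤ n) (a : ℕ → ℝ) (h0 : a 0 = 0) :
    HasDerivAt (fun x : ℝ => ∑ t ∈ Finset.range n, a t * x ^ t * (1 - x) ^ (n - 1 - t))
      (a 1) 0 := by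
  have hterm : ∀ t ∈ Finset.range n, HasDerivAt
      (fun x : ℝ => a t * x ^ t * (1 - x) ^ (n - 1 - t)) (if t = 1 then a 1 else 0) 0 := by
    intro t _
    have h1 := ((hasDerivAt_id (0 : ℝ)).pow t).const_mul (a t)
    have h2 := ((hasDerivAt_id (0 : ℝ)).const_sub 1).pow (n - 1 - t)
    refine (h1.mul h2).congr_deriv ?_
    rcases t with _ | _ | t <;> simp [h0]
  refine (HasDerivAt.fun_sum hterm).congr_deriv ?_
  rw [Finset.sum_ite_eq' (Finset.range n) 1 (fun _ => a 1), if_pos (Finset.mem_range.2 hn)]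

/-- If `F` is monotone on `[0,1]`, fixes `0` and has slope more than `1` there, then the orbit of
`1` stays away from `0`. -/
lemma slope_le_one {F : ℝ → ℝ} {s : ℝ} (hF : HasDerivAt F s 0) (h0 : F 0 = 0)
    (hmono : MonotoneOn F (Set.Icc 0 1)) (hmaps : Set.MapsTo F (Set.Icc 0 1) (Set.Icc 0 1))
    (hlim : Tendsto (fun i : ℕ => F^[i] 1) atTop (nhds 0)) : s ≤ 1 := by
  by_contra! hs
  have hslope := hF.tendsto_slope.mono_left
    (nhdsWithin_mono 0
    (show Set.Ioi (0 : ℝ) ⊆ {0}ᶜ from fun x hx => ne_of_gt hx))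
  have hev := (hslope.eventually_const_lt hs).and
    (Ioo_mem_nhdsGT (show (0 : ℝ) < 1 by norm_num))
  obtain ⟨x, hx, hx0, hx1⟩ := hev.exists
  have hlt : x < F x := by
    rw [slope_def_field, h0, sub_zero, sub_zero, lt_div_iff₀ hx0, one_mul] at hx
    exact hx
  have horb : ∀ i : ℕ, x ≤ F^[i] 1 ∧ F^[i] 1 ∈ Set.Icc (0 : ℝ) 1 := by
    intro i
    induction i with
    | zero => exact ⟨hx1.le, by simp⟩
    | succ i ih =>
      rw [Function.iterate_succ_apply']
      exact ⟨hlt.le.trans (hmono ⟨hx0.le, hx1.le⟩ ih.2 ih.1), hmaps ih.2⟩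
  exact absurd (ge_of_tendsto' hlim (fun i => (horb i).1)) (not_le.2 hx0)

theorem stmt11 (k nc : ℕ) (hk : 1 ≤ k) (n : Fin nc → ℕ)
    (C : ∀ h : Fin nc, Matrix (Fin k) (Fin (n h)) (ZMod 2))
    (hrank : ∀ h, (C h).rank = k)
    (hdmin : ∀ h, ∀ c ∈ LinearMap.range (C h).vecMulLinear, c ≠ 0 → 2 ≤ wt c)
    (P : Fin nc → ℝ) (hP : ∀ h, 0 ≤ P h) (hPsum : ∑ h, P h = 1)
    (A2bar : ℝ)
    (hA2 : A2bar = ∑ h, P h *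
        ((Finset.univ.filter (fun c : Fin (n h) → ZMod 2 =>
          c ∈ LinearMap.range (C h).vecMulLinear ∧ wt c = 2)).card : ℝ))
    (hA2pos : 0 < A2bar)
    (a : Fin nc → ℕ → ℝ)
    (ha : ∀ h t, a h t
      = ((n h - t : ℕ) : ℝ) * (infoFun (C h) (n h - t) : ℝ)
        - ((t + 1 : ℕ) : ℝ) * (infoFun (C h) (n h - 1 - t) : ℝ))
    (f : ℝ → ℝ → ℝ)
    (hf : ∀ x G, f x G
      = 1 - Real.exp (-(G / k) * ∑ h, P h *
          ∑ t ∈ Finset.range (n h), a h t * x ^ t * (1 - x) ^ (n h - 1 - t)))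
    (hmono : ∀ G : ℝ, 0 < G → MonotoneOn (fun x => f x G) (Set.Icc 0 1))
    (hmaps : ∀ G : ℝ, 0 < G → Set.MapsTo (fun x => f x G) (Set.Icc 0 1) (Set.Icc 0 1)) :
    (∀ G : ℝ, 0 < G →
      Tendsto (fun i : ℕ => (fun x => f x G)^[i] 1) atTop (nhds 0) →
      G ≤ k / (2 * A2bar)) ∧
    sSup {G : ℝ | 0 ≤ G ∧
        Tendsto (fun i : ℕ => (fun x => f x G)^[i] 1) atTop (nhds 0)}
      ≤ k / (2 * A2bar) := by
  have hn : ∀ h, 2 ≤ n h := fun h => two_le_length hk (C h) (hrank h) (hdmin h)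
  have ha0 : ∀ h, a h 0 = 0 := by
    intro h
    have e0 := infoFun_of_le_one (C h) (hrank h) (hdmin h) (n h) (by omega)
    have e1 := infoFun_of_le_one (C h) (hrank h) (hdmin h) (n h - 1) (by omega)
    rw [Nat.choose_symm (by have := hn h; omega), Nat.choose_one_right] at e1
    rw [ha, Nat.sub_zero, Nat.sub_zero, e0, e1]
    simp
  have ha1 : ∀ h, a h 1 = 2 * ((Finset.univ.filter (fun c : Fin (n h) → ZMod 2 =>
          c ∈ LinearMap.range (C h).vecMulLinear ∧ wt c = 2)).card : ℝ) := by
    intro h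
    have e1 := infoFun_of_le_one (C h) (hrank h) (hdmin h) (n h - 1) (by omega)
    rw [Nat.choose_symm (by have := hn h; omega), Nat.choose_one_right] at e1
    have e2 := congrArg (Nat.cast (R := ℝ)) (infoFun_sub_two (C h) (hrank h) (hdmin h) (hn h))
    push_cast [Nat.cast_choose_two] at e2
    rw [ha, Nat.sub_sub, e1]
    have hc : ((n h - 1 : ℕ) : ℝ) = (n h : ℝ) - 1 := by
      rw [Nat.cast_sub (by have := hn h; omega), Nat.cast_one]
    push_cast [hc]
    linarith
  have hkpos : (0 : ℝ) < k := by exact_mod_cast hk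
  have hmain : ∀ G : ℝ, 0 < G →
      Tendsto (fun i : ℕ => (fun x => f x G)^[i] 1) atTop (nhds 0) →
      G ≤ k / (2 * A2bar) := by
    intro G hG hlim
    have hS : HasDerivAt (fun x : ℝ => ∑ h, P h *
          ∑ t ∈ Finset.range (n h), a h t * x ^ t * (1 - x) ^ (n h - 1 - t))
        (2 * A2bar) 0 := by
      refine (HasDerivAt.fun_sum (fun h _ =>
        (hasDerivAt_bernstein_sum (n h) (hn h) (a h) (ha0 h)).const_mul (P h))).congr_deriv ?_
      rw [hA2, Finset.mul_sum]
      refine Finset.sum_congr rfl fun h _ => ?_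
      rw [ha1]
      ring
    have hS0 : ∑ h, P h *
          ∑ t ∈ Finset.range (n h), a h t * (0 : ℝ) ^ t * (1 - 0) ^ (n h - 1 - t) = 0 := by
      refine Finset.sum_eq_zero fun h _ => ?_
      rw [Finset.sum_eq_zero, mul_zero]
      intro t _
      rcases t with _ | t <;> simp [ha0]
    have hF : HasDerivAt (fun x => f x G) (G / k * (2 * A2bar)) 0 := by
      simp only [hf]
      refine ((hS.const_mul (-(G / k))).exp.const_sub 1).congr_deriv ?_
      rw [hS0]
      simp
    have hF0 : (fun x => f x G) 0 = 0 := by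
      simp only [hf, hS0]
      simp
    have hs := slope_le_one hF hF0 (hmono G hG) (hmaps G hG) hlim
    rw [le_div_iff₀ (by positivity)]
    rwa [div_mul_eq_mul_div, div_le_one hkpos] at hs
  refine ⟨hmain, Real.sSup_le ?_ (by positivity)⟩
  rintro G ⟨hG, hlim⟩
  rcases hG.eq_or_lt with rfl | hG
  · positivity
  · exact hmain G hG hlim
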